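/- arXiv:1410.2342 — 3 statements merged into one kernel-verified Lean document; each statement's English description precedes it below -/
import Mathlib

section
/- The pair (G, A) is almost convex if and only if the pair (G, A) is geodesically stackable. -/
namespace Stk

variable {G : Type*} [Group G] {A : Type*}

/-- Evaluation of a word over the generating alphabet in the group. -/
def eval (ρ : A → G) (w : List A) : G := (w.map ρ).prod

/-- `C` is a set of normal forms: evaluation restricted to `C` is a bijection onto `G`. -/
def IsNormalFormSet (ρ : A → G) (C : Set (List A)) : Prop :=
  ∀ g : G, ∃! w : List A, w ∈ C ∧ eval ρ w = g

/-- The directed edge `(g, a)` of the Cayley graph is degenerate with respect to `C`. -/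
def IsDegenerate (ρ : A → G) (ι : A → A) (C : Set (List A)) (e : G × A) : Prop :=
  ∃ y₁ y₂ : List A, y₁ ∈ C ∧ eval ρ y₁ = e.1 ∧ y₂ ∈ C ∧ eval ρ y₂ = e.1 * ρ e.2 ∧
    (y₁ ++ [e.2] = y₂ ∨ y₁ = y₂ ++ [ι e.2])

/-- A non-degenerate edge is recursive. -/
def IsRecursive (ρ : A → G) (ι : A → A) (C : Set (List A)) (e : G × A) : Prop :=
  ¬ IsDegenerate ρ ι C e

/-- `e` is one of the edges along the path starting at `g` labeled by the word `w`. -/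
def EdgeOnPath (ρ : A → G) (g : G) (w : List A) (e : G × A) : Prop :=
  ∃ i : Fin w.length, e = (g * eval ρ (w.take i), w.get i)

/-- A stackable structure for `(G, A)`: a normal form set `C` containing the empty word,
a well-founded strict partial order `lt` on the recursive edges, and a constant `k`,
such that each edge `(g, a)` admits a word of length at most `k` evaluating to `ρ a`,
each of whose edges along the path from `g` is degenerate or recursive and `lt`-below
`(g, a)`. -/
def IsStackableStructure (ρ : A → G) (ι : A → A) (C : Set (List A))
    (lt : G × A → G × A → Prop) (k : ℕ) : Prop :=
  ([] : List A) ∈ C ∧ IsNormalFormSet ρ C ∧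
  (∀ e e' : G × A, lt e e' → IsRecursive ρ ι C e ∧ IsRecursive ρ ι C e') ∧
  Transitive lt ∧ WellFounded lt ∧
  ∀ g : G, ∀ a : A, ∃ w : List A, w.length ≤ k ∧ eval ρ w = ρ a ∧
    ∀ e' : G × A, EdgeOnPath ρ g w e' → IsDegenerate ρ ι C e' ∨ lt e' (g, a)

/-- The pair `(G, A)` is stackable. -/
def IsStackable (ρ : A → G) (ι : A → A) : Prop :=
  ∃ (C : Set (List A)) (lt : G × A → G × A → Prop) (k : ℕ),
    IsStackableStructure ρ ι C lt k

/-- A stacking map for a stackable structure. -/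
def IsStackingMap (ρ : A → G) (ι : A → A) (C : Set (List A))
    (lt : G × A → G × A → Prop) (k : ℕ) (Φ : G × A → List A) : Prop :=
  ∀ e : G × A, IsRecursive ρ ι C e →
    eval ρ (Φ e) = ρ e.2 ∧ (Φ e).length ≤ k ∧
    ∀ e' : G × A, EdgeOnPath ρ e.1 (Φ e) e' → IsDegenerate ρ ι C e' ∨ lt e' e

/-- A stacking map extended by `Φ (g, a) = [a]` on degenerate edges. -/
def IsExtendedStackingMap (ρ : A → G) (ι : A → A) (C : Set (List A))
    (lt : G × A → G × A → Prop) (k : ℕ) (Φ : G × A → List A) : Prop :=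
  (∀ e : G × A, IsDegenerate ρ ι C e → Φ e = [e.2]) ∧ IsStackingMap ρ ι C lt k Φ

/-- A word is freely reduced if no letter is followed by its formal inverse. -/
def FreelyReduced (ι : A → A) (w : List A) : Prop :=
  List.Chain' (fun a b => b ≠ ι a) w


/-- Word length of a group element with respect to the generating set. -/
noncomputable def wlen (ρ : A → G) (g : G) : ℕ :=
  sInf {n : ℕ | ∃ w : List A, w.length = n ∧ eval ρ w = g}

/-- The path starting at `g` labeled by `w` lies in the ball of radius `n`: all vertices
are within distance `n` of the identity, and no edge has both endpoints at distance
exactly `n`. -/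
def PathInBall (ρ : A → G) (g : G) (w : List A) (n : ℕ) : Prop :=
  (∀ p : List A, p <+: w → wlen ρ (g * eval ρ p) ≤ n) ∧
  ∀ (p : List A) (a : A), p ++ [a] <+: w →
    ¬ (wlen ρ (g * eval ρ p) = n ∧ wlen ρ (g * eval ρ (p ++ [a])) = n)

/-- `(G, A)` is almost convex. -/
def IsAlmostConvex (ρ : A → G) : Prop :=
  ∃ k : ℕ, ∀ (n : ℕ) (g h : G), wlen ρ g = n → wlen ρ h = n →
    wlen ρ (g⁻¹ * h) ≤ 2 →
    ∃ w : List A, w.length ≤ k ∧ eval ρ w = g⁻¹ * h ∧ PathInBall ρ g w n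

/-- The average distance to the identity of the endpoints of an edge. -/
noncomputable def edgeDist (ρ : A → G) (e : G × A) : ℚ :=
  ((wlen ρ e.1 : ℚ) + (wlen ρ (e.1 * ρ e.2) : ℚ)) / 2

/-- The basic relation whose transitive closure is `<_Φ`: `e'` precedes `e` if both are
recursive and `e'` lies along the path of `Φ e`. -/
def FlowPrec (ρ : A → G) (ι : A → A) (C : Set (List A)) (Φ : G × A → List A)
    (e' e : G × A) : Prop :=
  IsRecursive ρ ι C e ∧ IsRecursive ρ ι C e' ∧ EdgeOnPath ρ e.1 (Φ e) e'

/-- `(G, A)` is geodesically stackable: stackable with geodesic normal forms and a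
stacking map compatible with distance to the identity. -/
def IsGeodesicallyStackable (ρ : A → G) (ι : A → A) : Prop :=
  ∃ (C : Set (List A)) (lt : G × A → G × A → Prop) (k : ℕ) (Φ : G × A → List A),
    IsStackableStructure ρ ι C lt k ∧ IsStackingMap ρ ι C lt k Φ ∧
    (∀ w ∈ C, w.length = wlen ρ (eval ρ w)) ∧
    ∀ e' e : G × A, Relation.TransGen (FlowPrec ρ ι C Φ) e' e →
      edgeDist ρ e' < edgeDist ρ e

/-!
Both notions are conditions on the heights of edges, where the height `2 * α e` of an edge `e` is
the sum of the lengths of its endpoints: a path starting in the ball of radius `n` stays in it iff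
all its edges have height `< 2 * n`.

Given almost convexity, take normal forms along a geodesic spanning tree. A recursive edge between
two spheres is replaced by the tree edge at its farther endpoint together with an almost convexity
path in the ball around the identity through its nearer endpoint, and an edge within a sphere by
such a path alone.

Conversely, join two points of the sphere of radius `n` by a path of length at most `2`; its edges
have height at most `2 * n + 1`. Applying the stacking map twice leaves only degenerate edges and
edges of height `< 2 * n`. The excursions out of the ball then run in the geodesic tree, so they
backtrack and can be cancelled without lengthening the path.
-/

variable {ρ : A → G} {ι : A → A} {C : Set (List A)} {g : G} {a b : A} {k n : ℕ}

/-! ### Words and paths -/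

@[simp]
theorem eval_nil : eval ρ [] = 1 := rfl

@[simp]
theorem eval_cons (a : A) (w : List A) : eval ρ (a :: w) = ρ a * eval ρ w := by
  simp [eval]

@[simp]
theorem eval_append (v w : List A) : eval ρ (v ++ w) = eval ρ v * eval ρ w := by
  simp [eval]

theorem eval_surjective (hgen : Subgroup.closure (Set.range ρ) = ⊤)
    (hρι : ∀ a, ρ (ι a) = (ρ a)⁻¹) : Function.Surjective (eval ρ) := by
  intro g
  have hinv : (Set.range ρ)⁻¹ ⊆ Set.range ρ := by
    rintro x ⟨a, ha⟩
    exact ⟨ι a, by rw [hρι, ha, inv_inv]⟩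
  have hg : g ∈ Submonoid.closure (Set.range ρ) := by
    rw [← Set.union_eq_self_of_subset_right hinv, ← Subgroup.closure_toSubmonoid, hgen]
    trivial
  obtain ⟨l, hl, rfl⟩ := Submonoid.exists_list_of_mem_closure hg
  obtain ⟨w, rfl⟩ : l ∈ Set.range (List.map ρ) := by rwa [Set.range_list_map]
  exact ⟨w, rfl⟩

@[simp]
theorem not_edgeOnPath_nil {e : G × A} : ¬ EdgeOnPath ρ g [] e :=
  fun ⟨i, _⟩ => i.elim0

@[simp]
theorem edgeOnPath_cons {w : List A} {e : G × A} :
    EdgeOnPath ρ g (a :: w) e ↔ e = (g, a) ∨ EdgeOnPath ρ (g * ρ a) w e := by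
  simp [EdgeOnPath, Fin.exists_fin_succ, mul_assoc]

@[simp]
theorem edgeOnPath_append {v w : List A} {e : G × A} :
    EdgeOnPath ρ g (v ++ w) e ↔ EdgeOnPath ρ g v e ∨ EdgeOnPath ρ (g * eval ρ v) w e := by
  induction v generalizing g with
  | nil => simp
  | cons a v ih => simp [ih, or_assoc, mul_assoc]

theorem edgeOnPath_iff_exists_prefix {w : List A} {e : G × A} :
    EdgeOnPath ρ g w e ↔ ∃ p, p ++ [e.2] <+: w ∧ e.1 = g * eval ρ p := by
  constructor
  · rintro ⟨i, rfl⟩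
    exact ⟨w.take i, by simpa using List.take_prefix (i + 1) w, rfl⟩
  · rintro ⟨p, ⟨v, rfl⟩, he⟩
    simp [Prod.ext_iff, he]

/-! ### Word length -/

theorem wlen_eval_le (w : List A) : wlen ρ (eval ρ w) ≤ w.length :=
  Nat.sInf_le ⟨w, rfl, rfl⟩

theorem exists_geodesic (hρ : Function.Surjective (eval ρ)) (g : G) :
    ∃ w, w.length = wlen ρ g ∧ eval ρ w = g := by
  obtain ⟨w, hw⟩ := hρ g
  exact Nat.sInf_mem (s := {n | ∃ w : List A, w.length = n ∧ eval ρ w = g}) ⟨_, w, rfl, hw⟩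

theorem wlen_one : wlen ρ (1 : G) = 0 :=
  Nat.le_zero.1 (wlen_eval_le [])

theorem eq_one_of_wlen_eq_zero (hρ : Function.Surjective (eval ρ)) (hg : wlen ρ g = 0) :
    g = 1 := by
  obtain ⟨w, hlen, rfl⟩ := exists_geodesic hρ g
  rw [hg, List.length_eq_zero_iff] at hlen
  rw [hlen, eval_nil]

theorem wlen_mul_eval_le (hρ : Function.Surjective (eval ρ)) (g : G) (w : List A) :
    wlen ρ (g * eval ρ w) ≤ wlen ρ g + w.length := by
  obtain ⟨v, hv, rfl⟩ := exists_geodesic hρ g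
  simpa [hv] using wlen_eval_le (ρ := ρ) (v ++ w)

theorem wlen_mul_le_add_one (hρ : Function.Surjective (eval ρ)) (g : G) (a : A) :
    wlen ρ (g * ρ a) ≤ wlen ρ g + 1 := by
  simpa using wlen_mul_eval_le hρ g [a]

theorem wlen_le_wlen_mul_add_one (hρ : Function.Surjective (eval ρ))
    (hρι : ∀ a, ρ (ι a) = (ρ a)⁻¹) (g : G) (a : A) :
    wlen ρ g ≤ wlen ρ (g * ρ a) + 1 := by
  simpa [hρι] using wlen_mul_le_add_one hρ (g * ρ a) (ι a)

theorem wlen_le_wlen_mul_eval_add_length (hρ : Function.Surjective (eval ρ))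
    (hρι : ∀ a, ρ (ι a) = (ρ a)⁻¹) (g : G) (w : List A) :
    wlen ρ g ≤ wlen ρ (g * eval ρ w) + w.length := by
  induction w generalizing g with
  | nil => simp
  | cons a w ih =>
    have := wlen_le_wlen_mul_add_one hρ hρι g a
    have := ih (g * ρ a)
    rw [eval_cons, List.length_cons, ← mul_assoc]
    omega

theorem exists_wlen_mul_add_one_eq (hρ : Function.Surjective (eval ρ))
    (hρι : ∀ a, ρ (ι a) = (ρ a)⁻¹) (hg : wlen ρ g ≠ 0) :
    ∃ a, wlen ρ (g * ρ a) + 1 = wlen ρ g := by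
  obtain ⟨w, hlen, rfl⟩ := exists_geodesic hρ g
  obtain rfl | ⟨v, a, rfl⟩ := w.eq_nil_or_concat'
  · exact absurd wlen_one hg
  · have hback : eval ρ (v ++ [a]) * ρ (ι a) = eval ρ v := by simp [hρι]
    have hstep := wlen_le_wlen_mul_add_one hρ hρι (eval ρ (v ++ [a])) (ι a)
    have hv := wlen_eval_le (ρ := ρ) v
    rw [List.length_append, List.length_singleton] at hlen
    exact ⟨ι a, by rw [hback] at hstep ⊢; omega⟩

/-! ### Heights of edges -/

/-- The height of an edge, the sum of the lengths of its endpoints. It is `2 * edgeDist ρ e`, kept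
in `ℕ` where the order is well-founded. -/
noncomputable def edgeHeight (ρ : A → G) (e : G × A) : ℕ :=
  wlen ρ e.1 + wlen ρ (e.1 * ρ e.2)

theorem edgeHeight_mk (g : G) (a : A) :
    edgeHeight ρ (g, a) = wlen ρ g + wlen ρ (g * ρ a) := rfl

theorem edgeDist_lt_edgeDist_iff {e e' : G × A} :
    edgeDist ρ e' < edgeDist ρ e ↔ edgeHeight ρ e' < edgeHeight ρ e := by
  rw [edgeDist, edgeDist, div_lt_div_iff_of_pos_right two_pos, edgeHeight, edgeHeight]
  norm_cast

theorem edgeHeight_lt_of_edgeOnPath (hρ : Function.Surjective (eval ρ))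
    (hρι : ∀ a, ρ (ι a) = (ρ a)⁻¹) {w : List A} {e : G × A} (he : EdgeOnPath ρ g w e) :
    edgeHeight ρ e < wlen ρ g + wlen ρ (g * eval ρ w) + w.length := by
  induction w generalizing g with
  | nil => exact absurd he not_edgeOnPath_nil
  | cons a w ih =>
    rw [eval_cons, List.length_cons, ← mul_assoc]
    obtain rfl | he := edgeOnPath_cons.1 he
    · have := wlen_le_wlen_mul_eval_add_length hρ hρι (g * ρ a) w
      rw [edgeHeight_mk]
      omega
    · have := ih he
      have := wlen_mul_le_add_one hρ g a
      omega

theorem pathInBall_iff_edgeHeight_lt (hρ : Function.Surjective (eval ρ)) {w : List A} :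
    PathInBall ρ g w n ↔ wlen ρ g ≤ n ∧ ∀ e, EdgeOnPath ρ g w e → edgeHeight ρ e < 2 * n := by
  constructor
  · rintro ⟨hvertex, hedge⟩
    refine ⟨by simpa using hvertex [] List.nil_prefix, fun ⟨x, a⟩ he => ?_⟩
    obtain ⟨p, hp, rfl : x = g * eval ρ p⟩ := edgeOnPath_iff_exists_prefix.1 he
    have hstart := hvertex p ((List.prefix_append p [a]).trans hp)
    have hend := hvertex _ hp
    have hne := hedge p a hp
    simp only [edgeHeight, eval_append, eval_cons, eval_nil, mul_one, ← mul_assoc] at hend hne ⊢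
    omega
  · rintro ⟨hg, hheight⟩
    have hlt (p : List A) (a : A) (hp : p ++ [a] <+: w) :
        wlen ρ (g * eval ρ p) + wlen ρ (g * eval ρ (p ++ [a])) < 2 * n := by
      simpa [edgeHeight, mul_assoc] using
        hheight (g * eval ρ p, a) (edgeOnPath_iff_exists_prefix.2 ⟨p, hp, rfl⟩)
    refine ⟨fun p hp => ?_, fun p a hp => by have := hlt p a hp; omega⟩
    obtain rfl | ⟨q, a, rfl⟩ := p.eq_nil_or_concat'
    · simpa using hg
    · have := hlt q a hp
      have := wlen_mul_le_add_one hρ (g * eval ρ q) a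
      simp only [eval_append, eval_cons, eval_nil, mul_one, ← mul_assoc] at *
      omega

/-! ### Almost convexity in terms of heights -/

/-- `k` is an almost convexity constant of `ρ`: points on a common sphere at distance at most `2`
are joined by a path of length at most `k` in the ball they bound, the ball being described through
`pathInBall_iff_edgeHeight_lt`. -/
def IsAlmostConvexConstant (ρ : A → G) (k : ℕ) : Prop :=
  ∀ g h : G, wlen ρ g = wlen ρ h → wlen ρ (g⁻¹ * h) ≤ 2 →
    ∃ w : List A, w.length ≤ k ∧ eval ρ w = g⁻¹ * h ∧
      ∀ e, EdgeOnPath ρ g w e → edgeHeight ρ e < 2 * wlen ρ g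

theorem isAlmostConvex_iff_exists_isAlmostConvexConstant (hρ : Function.Surjective (eval ρ)) :
    IsAlmostConvex ρ ↔ ∃ k, IsAlmostConvexConstant ρ k := by
  simp only [IsAlmostConvex, IsAlmostConvexConstant, pathInBall_iff_edgeHeight_lt hρ]
  refine exists_congr fun k => ⟨fun hk g h hgh h2 => ?_, ?_⟩
  · simpa using hk _ g h rfl hgh.symm h2
  · rintro hk _ g h rfl hgh h2
    simpa using hk g h hgh.symm h2

/-! ### Geodesic normal forms -/

namespace IsNormalFormSet

/-- The normal form `y_g` of `g`. -/
noncomputable def word (hC : IsNormalFormSet ρ C) (g : G) : List A :=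
  (hC g).choose

theorem word_mem (hC : IsNormalFormSet ρ C) (g : G) : hC.word g ∈ C :=
  (hC g).choose_spec.1.1

theorem eval_word (hC : IsNormalFormSet ρ C) (g : G) : eval ρ (hC.word g) = g :=
  (hC g).choose_spec.1.2

theorem word_eq (hC : IsNormalFormSet ρ C) {w : List A} (hw : w ∈ C) (hg : eval ρ w = g) :
    hC.word g = w :=
  (hC g).unique ⟨hC.word_mem g, hC.eval_word g⟩ ⟨hw, hg⟩

theorem isDegenerate_iff (hC : IsNormalFormSet ρ C) :
    IsDegenerate ρ ι C (g, a) ↔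
      hC.word (g * ρ a) = hC.word g ++ [a] ∨ hC.word g = hC.word (g * ρ a) ++ [ι a] := by
  constructor
  · rintro ⟨y₁, y₂, hy₁, h₁, hy₂, h₂, h⟩
    rwa [hC.word_eq hy₁ h₁, hC.word_eq hy₂ h₂, eq_comm (a := y₂)]
  · intro h
    exact ⟨_, _, hC.word_mem g, hC.eval_word g, hC.word_mem _, hC.eval_word _, h.imp_left Eq.symm⟩

end IsNormalFormSet

theorem isNormalFormSet_range {y : G → List A} (hy : Function.LeftInverse (eval ρ) y) :
    IsNormalFormSet ρ (Set.range y) := by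
  refine fun g => ⟨y g, ⟨⟨g, rfl⟩, hy g⟩, ?_⟩
  rintro _ ⟨⟨g, rfl⟩, rfl⟩
  rw [hy]

/-- A normal form set all of whose words are geodesic. -/
structure IsGeodesicNormalFormSet (ρ : A → G) (C : Set (List A)) : Prop where
  isNormalFormSet : IsNormalFormSet ρ C
  length_eq : ∀ w ∈ C, w.length = wlen ρ (eval ρ w)

namespace IsGeodesicNormalFormSet

theorem length_word (hC : IsGeodesicNormalFormSet ρ C) (g : G) :
    (hC.isNormalFormSet.word g).length = wlen ρ g := by
  rw [hC.length_eq _ (hC.isNormalFormSet.word_mem g), hC.isNormalFormSet.eval_word]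

theorem nil_mem (hC : IsGeodesicNormalFormSet ρ C) : [] ∈ C := by
  have hnil : hC.isNormalFormSet.word 1 = [] :=
    List.length_eq_zero_iff.1 ((hC.length_word 1).trans wlen_one)
  exact hnil ▸ hC.isNormalFormSet.word_mem 1

theorem word_eq_append_of_wlen_le (hC : IsGeodesicNormalFormSet ρ C)
    (hd : IsDegenerate ρ ι C (g, a)) (hle : wlen ρ g ≤ wlen ρ (g * ρ a)) :
    hC.isNormalFormSet.word (g * ρ a) = hC.isNormalFormSet.word g ++ [a] := by
  refine (hC.isNormalFormSet.isDegenerate_iff.1 hd).resolve_right fun hword => ?_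
  have hlen := congrArg List.length hword
  rw [List.length_append, hC.length_word, hC.length_word, List.length_singleton] at hlen
  omega

theorem word_eq_append_of_wlen_mul_le (hC : IsGeodesicNormalFormSet ρ C)
    (hd : IsDegenerate ρ ι C (g, a)) (hle : wlen ρ (g * ρ a) ≤ wlen ρ g) :
    hC.isNormalFormSet.word g = hC.isNormalFormSet.word (g * ρ a) ++ [ι a] := by
  refine (hC.isNormalFormSet.isDegenerate_iff.1 hd).resolve_left fun hword => ?_
  have hlen := congrArg List.length hword
  rw [List.length_append, hC.length_word, hC.length_word, List.length_singleton] at hlen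
  omega

theorem wlen_mul_eq_add_one (hC : IsGeodesicNormalFormSet ρ C)
    (hd : IsDegenerate ρ ι C (g, a)) (hle : wlen ρ g ≤ wlen ρ (g * ρ a)) :
    wlen ρ (g * ρ a) = wlen ρ g + 1 := by
  rw [← hC.length_word (g * ρ a), hC.word_eq_append_of_wlen_le hd hle, List.length_append,
    hC.length_word, List.length_singleton]

theorem eq_inv_of_peak (hC : IsGeodesicNormalFormSet ρ C)
    (ha : IsDegenerate ρ ι C (g, a)) (hup : wlen ρ g ≤ wlen ρ (g * ρ a))
    (hb : IsDegenerate ρ ι C (g * ρ a, b)) (hdown : wlen ρ (g * ρ a * ρ b) ≤ wlen ρ (g * ρ a)) :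
    a = ι b := by
  have hlast := (hC.word_eq_append_of_wlen_le ha hup).symm.trans
    (hC.word_eq_append_of_wlen_mul_le hb hdown)
  simpa using (List.append_inj' hlast rfl).2

end IsGeodesicNormalFormSet

open Classical in
/-- Normal forms read off a geodesic spanning tree of the Cayley graph, rooted at `1`: an element
`g` is attached to a neighbour `g * ρ a` of smaller length through the letter `ι a`. -/
noncomputable def treeWord (ρ : A → G) (ι : A → A) (g : G) : List A :=
  if h : ∃ a, wlen ρ (g * ρ a) + 1 = wlen ρ g then
    treeWord ρ ι (g * ρ h.choose) ++ [ι h.choose]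
  else []
termination_by wlen ρ g
decreasing_by exact Nat.lt_of_succ_le h.choose_spec.le

theorem treeWord_one : treeWord ρ ι (1 : G) = [] := by
  rw [treeWord, dif_neg]
  simp [wlen_one]

theorem exists_treeWord_eq_append (hρ : Function.Surjective (eval ρ))
    (hρι : ∀ a, ρ (ι a) = (ρ a)⁻¹) (hg : wlen ρ g ≠ 0) :
    ∃ a, wlen ρ (g * ρ a) + 1 = wlen ρ g ∧ treeWord ρ ι g = treeWord ρ ι (g * ρ a) ++ [ι a] := by
  have hdesc := exists_wlen_mul_add_one_eq hρ hρι hg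
  refine ⟨hdesc.choose, hdesc.choose_spec, ?_⟩
  rw [treeWord, dif_pos hdesc]

theorem treeWord_spec (hρ : Function.Surjective (eval ρ)) (hρι : ∀ a, ρ (ι a) = (ρ a)⁻¹) (g : G) :
    eval ρ (treeWord ρ ι g) = g ∧ (treeWord ρ ι g).length = wlen ρ g := by
  induction hn : wlen ρ g generalizing g with
  | zero =>
    obtain rfl := eq_one_of_wlen_eq_zero hρ hn
    simp [treeWord_one]
  | succ n ih =>
    obtain ⟨a, hlen, htree⟩ := exists_treeWord_eq_append hρ hρι (g := g) (by omega)
    obtain ⟨heval, hlength⟩ := ih (g * ρ a) (by omega)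
    simp [htree, heval, hlength, hρι]

theorem isGeodesicNormalFormSet_range_treeWord (hρ : Function.Surjective (eval ρ))
    (hρι : ∀ a, ρ (ι a) = (ρ a)⁻¹) :
    IsGeodesicNormalFormSet ρ (Set.range (treeWord ρ ι)) where
  isNormalFormSet := isNormalFormSet_range fun g => (treeWord_spec hρ hρι g).1
  length_eq := by
    rintro _ ⟨g, rfl⟩
    rw [(treeWord_spec hρ hρι g).1, (treeWord_spec hρ hρι g).2]

theorem exists_isDegenerate_of_wlen_ne_zero (hρ : Function.Surjective (eval ρ))
    (hρι : ∀ a, ρ (ι a) = (ρ a)⁻¹) (hg : wlen ρ g ≠ 0) :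
    ∃ a, wlen ρ (g * ρ a) + 1 = wlen ρ g ∧
      IsDegenerate ρ ι (Set.range (treeWord ρ ι)) (g, a) ∧
      IsDegenerate ρ ι (Set.range (treeWord ρ ι)) (g * ρ a, ι a) := by
  obtain ⟨a, hlen, htree⟩ := exists_treeWord_eq_append hρ hρι hg
  have heval (x : G) : eval ρ (treeWord ρ ι x) = x := (treeWord_spec hρ hρι x).1
  exact ⟨a, hlen,
    ⟨_, _, ⟨g, rfl⟩, heval g, ⟨_, rfl⟩, heval _, Or.inr htree⟩,
    ⟨_, _, ⟨_, rfl⟩, heval _, ⟨g, rfl⟩, by simp [heval, hρι], Or.inl htree.symm⟩⟩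

/-! ### Lowering words and geodesic stackability -/

/-- The edge `e` can be replaced by a path of length at most `k` whose edges lie in `D` or are
strictly lower than `e`. For `D` the degenerate edges, this is what a stacking map compatible with
`edgeDist` provides. -/
def HasLoweringWord (ρ : A → G) (D : G × A → Prop) (k : ℕ) (e : G × A) : Prop :=
  ∃ w : List A, w.length ≤ k ∧ eval ρ w = ρ e.2 ∧
    ∀ e', EdgeOnPath ρ e.1 w e' → D e' ∨ edgeHeight ρ e' < edgeHeight ρ e

theorem IsGeodesicallyStackable.exists_hasLoweringWord (h : IsGeodesicallyStackable ρ ι) :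
    ∃ C k, IsGeodesicNormalFormSet ρ C ∧
      ∀ e, IsRecursive ρ ι C e → HasLoweringWord ρ (IsDegenerate ρ ι C) k e := by
  obtain ⟨C, _, k, Φ, ⟨_, hC, _⟩, hΦ, hgeo, hflow⟩ := h
  refine ⟨C, k, ⟨hC, hgeo⟩, fun e he => ?_⟩
  obtain ⟨heval, hlen, _⟩ := hΦ e he
  refine ⟨Φ e, hlen, heval, fun e' he' => or_iff_not_imp_left.2 fun hrec => ?_⟩
  exact edgeDist_lt_edgeDist_iff.1 (hflow e' e (.single ⟨he, hrec, he'⟩))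

theorem IsGeodesicNormalFormSet.isGeodesicallyStackable (hC : IsGeodesicNormalFormSet ρ C)
    (hlow : ∀ e, IsRecursive ρ ι C e → HasLoweringWord ρ (IsDegenerate ρ ι C) k e) :
    IsGeodesicallyStackable ρ ι := by
  let lt (e' e : G × A) : Prop :=
    IsRecursive ρ ι C e' ∧ IsRecursive ρ ι C e ∧ edgeHeight ρ e' < edgeHeight ρ e
  have hword (e : G × A) : ∃ w : List A, w.length ≤ k + 1 ∧ eval ρ w = ρ e.2 ∧
      ∀ e', EdgeOnPath ρ e.1 w e' → IsDegenerate ρ ι C e' ∨ lt e' e := by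
    by_cases he : IsDegenerate ρ ι C e
    · exact ⟨[e.2], by simp, by simp, by simp [he]⟩
    · obtain ⟨w, hlen, heval, hw⟩ := hlow e he
      exact ⟨w, by omega, heval, fun e' he' =>
        or_iff_not_imp_left.2 fun hrec => ⟨hrec, he, (hw e' he').resolve_left hrec⟩⟩
  choose Φ hlen heval hΦ using hword
  have hflow {e' e : G × A} (h : FlowPrec ρ ι C Φ e' e) : lt e' e :=
    (hΦ e e' h.2.2).resolve_left h.2.1
  have htrans {e₁ e₂ e₃ : G × A} (h : lt e₁ e₂) (h' : lt e₂ e₃) : lt e₁ e₃ :=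
    ⟨h.1, h'.2.1, h.2.2.trans h'.2.2⟩
  have hwf : WellFounded lt := Subrelation.wf (fun h => h.2.2) (measure (edgeHeight ρ)).wf
  refine ⟨C, lt, k + 1, Φ, ⟨hC.nil_mem, hC.isNormalFormSet, fun _ _ h => ⟨h.1, h.2.1⟩,
    fun _ _ _ => htrans, hwf, fun g a => ⟨Φ (g, a), hlen _, heval _, hΦ (g, a)⟩⟩,
    fun e _ => ⟨heval e, hlen e, hΦ e⟩, hC.length_eq, fun e' e h => ?_⟩
  have : lt e' e := h.trans_induction_on hflow fun _ _ => htrans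
  exact edgeDist_lt_edgeDist_iff.2 this.2.2

/-! ### Almost convexity implies geodesic stackability -/

namespace IsAlmostConvexConstant

theorem hasLoweringWord_of_wlen_eq (hk : IsAlmostConvexConstant ρ k) (D : G × A → Prop)
    (heq : wlen ρ g = wlen ρ (g * ρ a)) : HasLoweringWord ρ D k (g, a) := by
  have hdist : wlen ρ (g⁻¹ * (g * ρ a)) ≤ 2 := by
    simpa using (wlen_eval_le (ρ := ρ) [a]).trans one_le_two
  obtain ⟨w, hlen, heval, hw⟩ := hk g (g * ρ a) heq hdist
  refine ⟨w, hlen, by simpa using heval, fun e he => Or.inr ?_⟩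
  have := hw e he
  rw [edgeHeight_mk g a]
  omega

theorem hasLoweringWord_of_wlen_mul_lt (hk : IsAlmostConvexConstant ρ k)
    (hρ : Function.Surjective (eval ρ)) (hρι : ∀ a, ρ (ι a) = (ρ a)⁻¹)
    (hlt : wlen ρ (g * ρ a) < wlen ρ g) :
    HasLoweringWord ρ (IsDegenerate ρ ι (Set.range (treeWord ρ ι))) (k + 1) (g, a) := by
  obtain ⟨b, hb, hdeg, -⟩ := exists_isDegenerate_of_wlen_ne_zero hρ hρι (g := g) (by omega)
  have hdist : wlen ρ ((g * ρ b)⁻¹ * (g * ρ a)) ≤ 2 := by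
    simpa [hρι, mul_assoc] using wlen_eval_le (ρ := ρ) [ι b, a]
  have hle := wlen_le_wlen_mul_add_one hρ hρι g a
  obtain ⟨w, hlen, heval, hw⟩ := hk (g * ρ b) (g * ρ a) (by omega) hdist
  refine ⟨b :: w, by simpa using hlen, by simp [heval, mul_assoc], fun e he => ?_⟩
  obtain rfl | he := edgeOnPath_cons.1 he
  · exact Or.inl hdeg
  · have := hw e he
    right
    rw [edgeHeight_mk g a]
    omega

theorem hasLoweringWord_of_wlen_lt_mul (hk : IsAlmostConvexConstant ρ k)
    (hρ : Function.Surjective (eval ρ)) (hρι : ∀ a, ρ (ι a) = (ρ a)⁻¹)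
    (hlt : wlen ρ g < wlen ρ (g * ρ a)) :
    HasLoweringWord ρ (IsDegenerate ρ ι (Set.range (treeWord ρ ι))) (k + 1) (g, a) := by
  obtain ⟨b, hb, -, hdeg⟩ := exists_isDegenerate_of_wlen_ne_zero hρ hρι (g := g * ρ a) (by omega)
  have hdist : wlen ρ (g⁻¹ * (g * ρ a * ρ b)) ≤ 2 := by
    simpa [mul_assoc] using wlen_eval_le (ρ := ρ) [a, b]
  have hle := wlen_mul_le_add_one hρ g a
  obtain ⟨w, hlen, heval, hw⟩ := hk g (g * ρ a * ρ b) (by omega) hdist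
  refine ⟨w ++ [ι b], by simpa using hlen, by simp [heval, hρι, mul_assoc], fun e he => ?_⟩
  obtain he | he := edgeOnPath_append.1 he
  · have := hw e he
    right
    rw [edgeHeight_mk g a]
    omega
  · obtain rfl : e = (g * ρ a * ρ b, ι b) := by simpa [heval] using he
    exact Or.inl hdeg

theorem hasLoweringWord (hk : IsAlmostConvexConstant ρ k)
    (hρ : Function.Surjective (eval ρ)) (hρι : ∀ a, ρ (ι a) = (ρ a)⁻¹) (e : G × A) :
    HasLoweringWord ρ (IsDegenerate ρ ι (Set.range (treeWord ρ ι))) (k + 1) e := by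
  obtain ⟨g, a⟩ := e
  obtain hlt | heq | hgt := lt_trichotomy (wlen ρ g) (wlen ρ (g * ρ a))
  · exact hk.hasLoweringWord_of_wlen_lt_mul hρ hρι hlt
  · obtain ⟨w, hlen, hw⟩ := hk.hasLoweringWord_of_wlen_eq _ heq
    exact ⟨w, by omega, hw⟩
  · exact hk.hasLoweringWord_of_wlen_mul_lt hρ hρι hgt

end IsAlmostConvexConstant

/-! ### Geodesic stackability implies almost convexity -/

section Lowering

variable {D : G × A → Prop}

theorem exists_eval_eq_and_edgeHeight_lt_of_lt_add_one
    (hlow : ∀ e, ¬ D e → HasLoweringWord ρ D k e) {m : ℕ} {w : List A}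
    (hw : ∀ e, EdgeOnPath ρ g w e → D e ∨ edgeHeight ρ e < m + 1) :
    ∃ w' : List A, w'.length ≤ (k + 1) * w.length ∧ eval ρ w' = eval ρ w ∧
      ∀ e, EdgeOnPath ρ g w' e → D e ∨ edgeHeight ρ e < m := by
  induction w generalizing g with
  | nil => exact ⟨[], by simp⟩
  | cons a w ih =>
    simp only [edgeOnPath_cons, forall_eq_or_imp] at hw
    obtain ⟨w', hlen, heval, hw'⟩ := ih hw.2
    obtain ⟨v, hvlen, hveval, hv⟩ : ∃ v : List A, v.length ≤ k + 1 ∧ eval ρ v = ρ a ∧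
        ∀ e, EdgeOnPath ρ g v e → D e ∨ edgeHeight ρ e < m := by
      by_cases hD : D (g, a)
      · exact ⟨[a], by simp, by simp, by simp [hD]⟩
      · obtain ⟨v, hvlen, hveval, hv⟩ := hlow (g, a) hD
        have hm := hw.1.resolve_left hD
        exact ⟨v, by omega, hveval, fun e he => (hv e he).imp_right fun hlt => by omega⟩
    refine ⟨v ++ w', ?_, by simp [heval, hveval], fun e he => ?_⟩
    · rw [List.length_append, List.length_cons, mul_add_one, add_comm]
      exact add_le_add hlen hvlen
    · rw [edgeOnPath_append, hveval] at he
      exact he.elim (hv e) (hw' e)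

theorem exists_eval_eq_and_edgeHeight_lt (hlow : ∀ e, ¬ D e → HasLoweringWord ρ D k e)
    {m : ℕ} (r : ℕ) {w : List A}
    (hw : ∀ e, EdgeOnPath ρ g w e → D e ∨ edgeHeight ρ e < m + r) :
    ∃ w' : List A, w'.length ≤ (k + 1) ^ r * w.length ∧ eval ρ w' = eval ρ w ∧
      ∀ e, EdgeOnPath ρ g w' e → D e ∨ edgeHeight ρ e < m := by
  induction r generalizing w with
  | zero => exact ⟨w, by simp, rfl, hw⟩
  | succ r ih =>
    obtain ⟨v, hvlen, hveval, hv⟩ := exists_eval_eq_and_edgeHeight_lt_of_lt_add_one hlow hw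
    obtain ⟨w', hlen, heval, hw'⟩ := ih hv
    refine ⟨w', ?_, heval.trans hveval, hw'⟩
    calc w'.length ≤ (k + 1) ^ r * v.length := hlen
      _ ≤ (k + 1) ^ r * ((k + 1) * w.length) := by gcongr
      _ = (k + 1) ^ (r + 1) * w.length := by ring

end Lowering

namespace IsGeodesicNormalFormSet

/-- Removes the peaks of the excursions out of the ball of radius `n`, starting from the end of the
path: what is left outside the ball can only descend. -/
theorem exists_eval_eq_and_lt_or_descending (hC : IsGeodesicNormalFormSet ρ C)
    (hρ : Function.Surjective (eval ρ)) (hρι : ∀ a, ρ (ι a) = (ρ a)⁻¹) {w : List A}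
    (hend : wlen ρ (g * eval ρ w) ≤ n)
    (hw : ∀ e, EdgeOnPath ρ g w e → IsDegenerate ρ ι C e ∨ edgeHeight ρ e < 2 * n) :
    ∃ w' : List A, w'.length ≤ w.length ∧ eval ρ w' = eval ρ w ∧
      ∀ e, EdgeOnPath ρ g w' e → edgeHeight ρ e < 2 * n ∨
        (IsDegenerate ρ ι C e ∧ wlen ρ (e.1 * ρ e.2) < wlen ρ e.1) := by
  induction w generalizing g with
  | nil => exact ⟨[], by simp⟩
  | cons a w ih =>
    simp only [edgeOnPath_cons, forall_eq_or_imp] at hw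
    rw [eval_cons, ← mul_assoc] at hend
    obtain ⟨w', hlen, heval, hw'⟩ := ih hend hw.2
    by_cases hgood : edgeHeight ρ (g, a) < 2 * n ∨
        (IsDegenerate ρ ι C (g, a) ∧ wlen ρ (g * ρ a) < wlen ρ g)
    · refine ⟨a :: w', by simpa using hlen, by simp [heval], ?_⟩
      simpa only [edgeOnPath_cons, forall_eq_or_imp] using ⟨hgood, hw'⟩
    have hdeg : IsDegenerate ρ ι C (g, a) := hw.1.resolve_right fun h => hgood (Or.inl h)
    have hup : wlen ρ g ≤ wlen ρ (g * ρ a) := le_of_not_gt fun h => hgood (Or.inr ⟨hdeg, h⟩)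
    have houtside : n < wlen ρ (g * ρ a) := by
      have hhigh : ¬ edgeHeight ρ (g, a) < 2 * n := fun h => hgood (Or.inl h)
      have := hC.wlen_mul_eq_add_one hdeg hup
      rw [edgeHeight_mk] at hhigh
      omega
    obtain _ | ⟨b, v⟩ := w'
    · rw [← heval, eval_nil, mul_one] at hend
      omega
    simp only [edgeOnPath_cons, forall_eq_or_imp] at hw'
    obtain ⟨hdeg', hdown⟩ := hw'.1.resolve_left fun hlow => by
      have := wlen_le_wlen_mul_add_one hρ hρι (g * ρ a) b
      rw [edgeHeight_mk] at hlow
      omega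
    have hcancel : ρ a * ρ b = 1 := by
      rw [hC.eq_inv_of_peak hdeg hup hdeg' hdown.le, hρι, inv_mul_cancel]
    refine ⟨v, by simp only [List.length_cons] at hlen ⊢; omega, ?_, ?_⟩
    · rw [eval_cons, ← heval, eval_cons, ← mul_assoc, hcancel, one_mul]
    · simpa [mul_assoc, hcancel] using hw'.2

end IsGeodesicNormalFormSet

theorem edgeHeight_lt_of_lt_or_descending (hρ : Function.Surjective (eval ρ)) {w : List A}
    (hg : wlen ρ g ≤ n)
    (hw : ∀ e, EdgeOnPath ρ g w e →
      edgeHeight ρ e < 2 * n ∨ wlen ρ (e.1 * ρ e.2) < wlen ρ e.1) :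
    ∀ e, EdgeOnPath ρ g w e → edgeHeight ρ e < 2 * n := by
  induction w generalizing g with
  | nil => simp
  | cons a w ih =>
    simp only [edgeOnPath_cons, forall_eq_or_imp] at hw ⊢
    have hhead : edgeHeight ρ (g, a) < 2 * n :=
      hw.1.elim id fun hdesc => by simp only [edgeHeight_mk] at hdesc ⊢; omega
    have hnext : wlen ρ (g * ρ a) ≤ n := by
      have := wlen_mul_le_add_one hρ g a
      rw [edgeHeight_mk] at hhead
      omega
    exact ⟨hhead, ih hnext hw.2⟩

theorem IsGeodesicNormalFormSet.isAlmostConvexConstant (hC : IsGeodesicNormalFormSet ρ C)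
    (hρ : Function.Surjective (eval ρ)) (hρι : ∀ a, ρ (ι a) = (ρ a)⁻¹)
    (hlow : ∀ e, IsRecursive ρ ι C e → HasLoweringWord ρ (IsDegenerate ρ ι C) k e) :
    IsAlmostConvexConstant ρ ((k + 1) ^ 2 * 2) := by
  intro g h hgh hdist
  obtain ⟨u, hulen, hueval⟩ := exists_geodesic hρ (g⁻¹ * h)
  have hend : g * eval ρ u = h := by rw [hueval, mul_inv_cancel_left]
  have hu (e : G × A) (he : EdgeOnPath ρ g u e) : edgeHeight ρ e < 2 * wlen ρ g + 2 := by
    have := edgeHeight_lt_of_edgeOnPath hρ hρι he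
    rw [hend] at this
    omega
  obtain ⟨v, hvlen, hveval, hv⟩ :=
    exists_eval_eq_and_edgeHeight_lt hlow 2 fun e he => Or.inr (hu e he)
  obtain ⟨w, hwlen, hweval, hw⟩ := hC.exists_eval_eq_and_lt_or_descending hρ hρι
    (by rw [hveval, hend, hgh]) hv
  refine ⟨w, ?_, hweval.trans (hveval.trans hueval),
    edgeHeight_lt_of_lt_or_descending hρ le_rfl fun e he => (hw e he).imp_right And.right⟩
  calc w.length ≤ v.length := hwlen
    _ ≤ (k + 1) ^ 2 * u.length := hvlen
    _ ≤ (k + 1) ^ 2 * 2 := by gcongr; omega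

theorem isAlmostConvex_iff_isGeodesicallyStackable_general {G : Type*} [Group G] {A : Type*}
    (ρ : A → G) (ι : A → A)
    (hgen : Subgroup.closure (Set.range ρ) = ⊤)
    (hρι : ∀ a : A, ρ (ι a) = (ρ a)⁻¹) :
    IsAlmostConvex ρ ↔ IsGeodesicallyStackable ρ ι := by
  have hρ := eval_surjective hgen hρι
  rw [isAlmostConvex_iff_exists_isAlmostConvexConstant hρ]
  constructor
  · rintro ⟨k, hk⟩
    exact (isGeodesicNormalFormSet_range_treeWord hρ hρι).isGeodesicallyStackable
      fun e _ => hk.hasLoweringWord hρ hρι e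
  · intro hstack
    obtain ⟨C, k, hC, hlow⟩ := hstack.exists_hasLoweringWord
    exact ⟨_, hC.isAlmostConvexConstant hρ hρι hlow⟩

/-- `(G, A)` is almost convex iff `(G, A)` is geodesically stackable. -/
theorem isAlmostConvex_iff_isGeodesicallyStackable {G : Type*} [Group G] {A : Type*}
    [Fintype A]
    (ρ : A → G) (ι : A → A)
    (hgen : Subgroup.closure (Set.range ρ) = ⊤)
    (hne : ∀ a : A, ρ a ≠ 1)
    (hinv : Function.Involutive ι)
    (hρι : ∀ a : A, ρ (ι a) = (ρ a)⁻¹) :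
    IsAlmostConvex ρ ↔ IsGeodesicallyStackable ρ ι :=
  isAlmostConvex_iff_isGeodesicallyStackable_general ρ ι hgen hρι

end Stk
end

section
/- Let p be an integer with |p| ≥ 2, and let BS(1,p) be the Baumslag–Solitar group presented by generators a, t and the single defining relator t·a·t⁻¹·a^{−p} (as a PresentedGroup quotient of the free group on two generators). Then every element of BS(1,p) is equal to the image of t^{−i} a^m t^k for exactly one triple (i, m, k) with i, k ∈ ℕ, m ∈ ℤ, and satisfying: p does not divide m, or i = 0, or k = 0. -/
/-- The Baumslag–Solitar group `BS(1, p)`, presented by generators `a`, `t` (the images of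
`false`, `true`) and the single defining relator `t * a * t⁻¹ * a ^ (-p)`. -/
def BaumslagSolitar (p : ℤ) : Type :=
  PresentedGroup ({FreeGroup.of true * FreeGroup.of false * (FreeGroup.of true)⁻¹ *
    (FreeGroup.of false) ^ (-p)} : Set (FreeGroup Bool))

instance (p : ℤ) : Group (BaumslagSolitar p) :=
  inferInstanceAs (Group (PresentedGroup _))

/-- The generator `a` of `BS(1, p)`. -/
def BaumslagSolitar.a (p : ℤ) : BaumslagSolitar p := PresentedGroup.of false

/-- The generator `t` of `BS(1, p)`. -/
def BaumslagSolitar.t (p : ℤ) : BaumslagSolitar p := PresentedGroup.of true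

/-! The relation `t a = aᵖ t` moves powers of `t` to the right past powers of `a`, so the words
`t⁻ⁱ aᵐ tᵏ` are stable under left multiplication by the generators and their inverses and hence
exhaust the group. If `p ∣ m` and `i, k > 0`, then `t⁻ⁱ aᵐ tᵏ = t⁻⁽ⁱ⁻¹⁾ a^(m/p) tᵏ⁻¹`, so a word
with the least possible `i` is reduced.

For uniqueness, left multiplication by `tⁱ⁺ʲ` turns an equality `t⁻ⁱ aᵐ tᵏ = t⁻ʲ aⁿ tˡ` into
`a^(pʲ m) tʲ⁺ᵏ = a^(pⁱ n) tⁱ⁺ˡ`. For `p ≠ 0` the exponent sum of `t` and the affine action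
`a : x ↦ x + 1`, `t : x ↦ p x` on `ℚ` show `pʲ m = pⁱ n` and `j + k = i + l`; between reduced
words this forces `i = j`. -/

theorem semiconjBy_pow_zpow {G : Type*} [Group G] {x y : G} {p : ℤ}
    (h : SemiconjBy y x (x ^ p)) (i : ℕ) (m : ℤ) :
    SemiconjBy (y ^ i) (x ^ m) (x ^ (p ^ i * m)) := by
  induction i with
  | zero => simp
  | succ i ih =>
    rw [pow_succ', pow_succ', mul_assoc, zpow_mul]
    exact (h.zpow_right _).mul_left ih

namespace BaumslagSolitar

variable {p : ℤ}

section Generators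

theorem semiconjBy_t_a (p : ℤ) : SemiconjBy (t p) (a p) (a p ^ p) := by
  have relator_eq_one : t p * a p * (t p)⁻¹ * a p ^ (-p) = 1 :=
    PresentedGroup.one_of_mem (Set.mem_singleton _)
  rwa [zpow_neg, mul_inv_eq_one, mul_inv_eq_iff_eq_mul] at relator_eq_one

theorem t_pow_mul_a_zpow (i : ℕ) (m : ℤ) :
    t p ^ i * a p ^ m = a p ^ (p ^ i * m) * t p ^ i :=
  (semiconjBy_pow_zpow (semiconjBy_t_a p) i m).eq

theorem closure_a_t (p : ℤ) : Subgroup.closure {a p, t p} = ⊤ := by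
  have range_of : {a p, t p} = Set.range (PresentedGroup.of : Bool → BaumslagSolitar p) :=
    (Bool.range_eq _).symm
  exact (congrArg Subgroup.closure range_of).trans (PresentedGroup.closure_range_of _)

end Generators

section Homomorphisms

variable {G : Type*} [Group G] {x y : G}

/-- The universal property of `BS(1, p)`: elements `x`, `y` of a group with `y x y⁻¹ = xᵖ` define
the homomorphism sending `a` to `x` and `t` to `y`. -/
def lift (h : SemiconjBy y x (x ^ p)) : BaumslagSolitar p →* G :=
  PresentedGroup.toGroup (f := fun b ↦ bif b then y else x) (by simp [h.eq])

@[simp]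
theorem lift_a (h : SemiconjBy y x (x ^ p)) : lift h (a p) = x :=
  PresentedGroup.toGroup.of _

@[simp]
theorem lift_t (h : SemiconjBy y x (x ^ p)) : lift h (t p) = y :=
  PresentedGroup.toGroup.of _

/-- The homomorphism to `ℤ`, written multiplicatively, that gives the exponent sum of `t`. -/
def tExponent (p : ℤ) : BaumslagSolitar p →* Multiplicative ℤ :=
  lift (x := 1) (y := Multiplicative.ofAdd 1) (by simp)

/-- The action of `BS(1, p)` on `ℚ` by affine maps: `a` is `x ↦ x + 1` and `t` is `x ↦ p x`. -/
def affineAction (hp : p ≠ 0) : BaumslagSolitar p →* Equiv.Perm ℚ :=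
  lift (x := Equiv.addRight 1) (y := Equiv.mulLeft₀ (p : ℚ) (Int.cast_ne_zero.mpr hp)) <| by
    ext x
    simp [mul_add]

@[simp]
theorem affineAction_a (hp : p ≠ 0) : affineAction hp (a p) = Equiv.addRight 1 :=
  lift_a _

end Homomorphisms

theorem a_zpow_injective (hp : p ≠ 0) : Function.Injective (a p ^ · : ℤ → BaumslagSolitar p) := by
  intro m n h
  have orbit_zero (m : ℤ) : affineAction hp (a p ^ m) 0 = m := by simp
  have cast_eq : (m : ℚ) = n :=
    calc (m : ℚ) = affineAction hp (a p ^ m) 0 := (orbit_zero m).symm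
      _ = affineAction hp (a p ^ n) 0 := congrArg (affineAction hp · 0) h
      _ = n := orbit_zero n
  exact_mod_cast cast_eq

theorem a_zpow_mul_t_pow_inj (hp : p ≠ 0) {m n : ℤ} {k l : ℕ} :
    a p ^ m * t p ^ k = a p ^ n * t p ^ l ↔ m = n ∧ k = l := by
  refine ⟨fun h ↦ ?_, fun ⟨hm, hk⟩ ↦ by rw [hm, hk]⟩
  have hkl : k = l := by
    simpa [tExponent, ← ofAdd_nsmul] using congrArg (tExponent p) h
  subst hkl
  exact ⟨a_zpow_injective hp (mul_right_cancel h), rfl⟩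

section Words

variable {i j k l : ℕ} {m n : ℤ}

/-- The element `t⁻ⁱ aᵐ tᵏ` of `BS(1, p)`. -/
def word (p : ℤ) (i : ℕ) (m : ℤ) (k : ℕ) : BaumslagSolitar p :=
  (t p ^ i)⁻¹ * a p ^ m * t p ^ k

/-- The condition on `(i, m, k)` that singles out the normal forms among the words `t⁻ⁱ aᵐ tᵏ`. -/
def IsReduced (p : ℤ) (i : ℕ) (m : ℤ) (k : ℕ) : Prop :=
  ¬ p ∣ m ∨ i = 0 ∨ k = 0

theorem a_zpow_mul_word (n : ℤ) (i : ℕ) (m : ℤ) (k : ℕ) :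
    a p ^ n * word p i m k = word p i (p ^ i * n + m) k := by
  have a_mul_t_inv : a p ^ n * (t p ^ i)⁻¹ = (t p ^ i)⁻¹ * a p ^ (p ^ i * n) := by
    rw [mul_inv_eq_iff_eq_mul, mul_assoc, eq_inv_mul_iff_mul_eq, t_pow_mul_a_zpow]
  simp only [word, zpow_add, ← mul_assoc, a_mul_t_inv]

theorem t_mul_word (i : ℕ) (m : ℤ) (k : ℕ) :
    t p * word p i m k = word p i (p * m) (k + 1) := by
  have t_mul_a : t p * a p ^ m = a p ^ (p * m) * t p := by simpa using t_pow_mul_a_zpow 1 m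
  calc t p * word p i m k = (t p ^ i)⁻¹ * (t p * a p ^ m) * t p ^ k := by
        simp only [word]; group
    _ = word p i (p * m) (k + 1) := by
        simp only [word, t_mul_a, pow_succ', mul_assoc]

theorem t_inv_mul_word (i : ℕ) (m : ℤ) (k : ℕ) :
    (t p)⁻¹ * word p i m k = word p (i + 1) m k := by
  simp only [word, pow_succ, mul_inv_rev, mul_assoc]

theorem exists_eq_word (g : BaumslagSolitar p) : ∃ i m k, g = word p i m k := by
  have hg : g ∈ Subgroup.closure {a p, t p} := closure_a_t p ▸ Subgroup.mem_top g
  induction hg using Subgroup.closure_induction_left with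
  | one => exact ⟨0, 0, 0, by simp [word]⟩
  | mul_left x hx g _ ih =>
    obtain ⟨i, m, k, rfl⟩ := ih
    obtain rfl | rfl := hx
    · exact ⟨_, _, _, by simpa using a_zpow_mul_word 1 i m k⟩
    · exact ⟨_, _, _, t_mul_word i m k⟩
  | inv_mul_cancel x hx g _ ih =>
    obtain ⟨i, m, k, rfl⟩ := ih
    obtain rfl | rfl := hx
    · exact ⟨_, _, _, by simpa using a_zpow_mul_word (-1) i m k⟩
    · exact ⟨_, _, _, t_inv_mul_word i m k⟩

theorem word_succ_mul_succ (i : ℕ) (m : ℤ) (k : ℕ) :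
    word p (i + 1) (p * m) (k + 1) = word p i m k := by
  rw [← t_inv_mul_word, ← t_mul_word, inv_mul_cancel_left]

theorem exists_isReduced_eq_word (g : BaumslagSolitar p) :
    ∃ i m k, IsReduced p i m k ∧ g = word p i m k := by
  classical
  have hg := exists_eq_word g
  obtain ⟨m, k, hgw⟩ := Nat.find_spec hg
  refine ⟨Nat.find hg, m, k, ?_, hgw⟩
  by_contra hred
  simp only [IsReduced, not_or, not_not] at hred
  obtain ⟨⟨n, rfl⟩, hi, hk⟩ := hred
  obtain ⟨i, hi⟩ := Nat.exists_eq_succ_of_ne_zero hi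
  obtain ⟨l, rfl⟩ := Nat.exists_eq_succ_of_ne_zero hk
  rw [hi, word_succ_mul_succ] at hgw
  exact Nat.find_min hg (by omega) ⟨n, l, hgw⟩

theorem t_pow_add_mul_word (i j : ℕ) (m : ℤ) (k : ℕ) :
    t p ^ (i + j) * word p i m k = a p ^ (p ^ j * m) * t p ^ (j + k) := by
  rw [word, add_comm, pow_add, mul_assoc, mul_assoc, mul_inv_cancel_left, ← mul_assoc,
    t_pow_mul_a_zpow, mul_assoc, ← pow_add]

theorem word_eq_word_iff (hp : p ≠ 0) :
    word p i m k = word p j n l ↔ p ^ j * m = p ^ i * n ∧ j + k = i + l := by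
  rw [← mul_right_inj (t p ^ (i + j)), t_pow_add_mul_word, add_comm i j, t_pow_add_mul_word,
    a_zpow_mul_t_pow_inj hp]

theorem IsReduced.le_of_word_eq_word (hp : p ≠ 0) (hred : IsReduced p i m k)
    (h : word p i m k = word p j n l) : i ≤ j := by
  obtain ⟨hmn, hkl⟩ := (word_eq_word_iff hp).mp h
  by_contra! hji
  obtain ⟨d, rfl⟩ := Nat.exists_eq_add_of_lt hji
  have hm : m = p ^ (d + 1) * n := by
    apply mul_left_cancel₀ (pow_ne_zero j hp)
    rw [hmn, ← mul_assoc, ← pow_add, add_assoc]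
  have hpm : p ∣ m := hm ▸ (dvd_pow_self p d.succ_ne_zero).mul_right n
  obtain hpm' | hi | hk := hred
  · exact hpm' hpm
  · omega
  · omega

theorem IsReduced.word_inj (hp : p ≠ 0) (hm : IsReduced p i m k) (hn : IsReduced p j n l) :
    word p i m k = word p j n l ↔ i = j ∧ m = n ∧ k = l := by
  refine ⟨fun h ↦ ?_, fun ⟨hi, hm, hk⟩ ↦ by rw [hi, hm, hk]⟩
  obtain rfl : i = j := (hm.le_of_word_eq_word hp h).antisymm (hn.le_of_word_eq_word hp h.symm)
  obtain ⟨hmn, hkl⟩ := (word_eq_word_iff hp).mp h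
  exact ⟨rfl, mul_left_cancel₀ (pow_ne_zero i hp) hmn, Nat.add_left_cancel hkl⟩

end Words

end BaumslagSolitar

open BaumslagSolitar in
theorem baumslagSolitar_normal_form_general (p : ℤ) (hp : p ≠ 0) (g : BaumslagSolitar p) :
    ∃! x : ℕ × ℤ × ℕ,
      (¬ (p ∣ x.2.1) ∨ x.1 = 0 ∨ x.2.2 = 0) ∧
      g = t p ^ (-(x.1 : ℤ)) * a p ^ x.2.1 * t p ^ (x.2.2 : ℤ) := by
  simp only [zpow_neg, zpow_natCast]
  obtain ⟨i, m, k, hred, hg⟩ := exists_isReduced_eq_word g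
  refine ⟨(i, m, k), ⟨hred, hg⟩, ?_⟩
  rintro ⟨j, n, l⟩ ⟨hred', hg'⟩
  obtain ⟨rfl, rfl, rfl⟩ := (IsReduced.word_inj hp hred hred').mp (hg.symm.trans hg')
  rfl

/-- for `|p| ≥ 2`, every element of `BS(1, p)` equals `t⁻ⁱ aᵐ tᵏ` for
exactly one triple `(i, m, k)` with `i, k ∈ ℕ`, `m ∈ ℤ`, and `p ∤ m` or `i = 0` or
`k = 0`. -/
theorem baumslagSolitar_normal_form (p : ℤ) (hp : 2 ≤ |p|) (g : BaumslagSolitar p) :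
    ∃! x : ℕ × ℤ × ℕ,
      (¬ (p ∣ x.2.1) ∨ x.1 = 0 ∨ x.2.2 = 0) ∧
      g = (BaumslagSolitar.t p) ^ (-(x.1 : ℤ)) * (BaumslagSolitar.a p) ^ x.2.1 *
        (BaumslagSolitar.t p) ^ (x.2.2 : ℤ) :=
  baumslagSolitar_normal_form_general p (abs_pos.mp (two_pos.trans_le hp)) g
end

section
/- Let A be a four-element alphabet {x₀, X₀, x₁, X₁} (where X₀, X₁ stand for the formal inverses x₀⁻¹, x₁⁻¹), and for w ∈ List A let σ(w) denote the number of occurrences of x₀ in w minus the number of occurrences of X₀ in w. Let U := { [x₀,X₀], [X₀,x₀], [x₁,X₁], [X₁,x₁], [x₀,x₀,x₁], [x₀,x₀,X₁] }. Then the language C := { w ∈ List A : no word of U occurs as a contiguous sublist of w, and every prefix w′ of w satisfies σ(w′) ≤ 0 } is a context-free language (Language.IsContextFree). (C is the normal form set of the stackable structure for Thompson's group F constructed in [CHST]; the paper proves the stronger fact that C is deterministic context-free, being the intersection of a regular language with a deterministic context-free language.) -/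
/-!
The language is the intersection of a regular and a context-free language. Avoiding finitely many
factors is a regular condition by Myhill–Nerode. The prefix condition describes a ballot language:
with letters of weight `1`, `-1` and `0`, no prefix has negative weight. The grammar
`S → ε | aS (weight 0) | aSCS (weight 1)`, `C → ε | a (weight -1)` generates it, since the
sentential form `S(CS)ⁿ` acts as a counter holding the current height `n`. The two are combined by
the Bar-Hillel construction, which annotates every nonterminal with the states of the automaton at
the two ends of the word it produces.
-/

section AvoidingFactors

variable {α : Type*} {U : Set (List α)}

theorem isRegular_setOf_exists_isInfix_mem (hU : U.Finite) :
    Language.IsRegular ({w | ∃ u ∈ U, u <:+: w} : Language α) := by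
  -- The left quotient by `x` depends only on whether `x` already has a factor in `U`, and on
  -- which prefixes of words of `U` are suffixes of `x`.
  let prefixes : Set (List α) := ⋃ u ∈ U, {s | s <+: u}
  let quotient (c : Prop × Set (List α)) : Language α :=
    {y | c.1 ∨ ∃ u ∈ U, u <:+: y ∨ ∃ s t, u = s ++ t ∧ s ∈ c.2 ∧ t <+: y}
  have prefixes_finite : prefixes.Finite := hU.biUnion fun u _ ↦ by
    simpa only [List.mem_inits] using u.inits.finite_toSet
  refine .of_finite_range_leftQuotient <|
    ((Set.finite_univ.prod prefixes_finite.finite_subsets).image quotient).subset ?_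
  rintro _ ⟨x, rfl⟩
  refine ⟨(∃ u ∈ U, u <:+: x, {s | s ∈ prefixes ∧ s <:+ x}),
    ⟨Set.mem_univ _, fun _ hs ↦ hs.1⟩, ?_⟩
  ext y
  change (_ ∨ _) ↔ ∃ u ∈ U, u <:+: x ++ y
  simp only [List.infix_append_iff, and_or_left, exists_or]
  refine or_congr_right (or_congr_right ⟨?_, ?_⟩)
  · rintro ⟨u, hu, s, t, rfl, ⟨-, hs⟩, ht⟩
    exact ⟨s ++ t, hu, s, t, rfl, hs, ht⟩
  · rintro ⟨u, hu, s, t, rfl, hs, ht⟩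
    exact ⟨s ++ t, hu, s, t, rfl, ⟨Set.mem_biUnion hu (List.prefix_append s t), hs⟩, ht⟩

theorem isRegular_setOf_forall_not_isInfix (hU : U.Finite) :
    Language.IsRegular ({w | ∀ u ∈ U, ¬ u <:+: w} : Language α) := by
  refine (congrArg Language.IsRegular (Set.ext fun w ↦ ?_)).mpr
    (isRegular_setOf_exists_isInfix_mem hU).compl
  change (∀ u ∈ U, ¬ u <:+: w) ↔ ¬ ∃ u ∈ U, u <:+: w
  simp only [not_exists, not_and]

end AvoidingFactors

section RunAnnotation

variable {T N σ : Type*} {M : DFA T σ} {p q r : σ}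

/-- `AnnotatesRun M p u v q`: the sentential form `v` arises from `u` by guessing a run of `M` from
`p` to `q`, where each nonterminal `n` of `u` becomes `some (s, n, t)` for the states `s` and `t` at
which the run enters and leaves the word produced by `n`. The nonterminal `none` never occurs in
`v`: it is the initial symbol of `barHillelGrammar`. -/
inductive AnnotatesRun (M : DFA T σ) :
    σ → List (Symbol T N) → List (Symbol T (Option (σ × N × σ))) → σ → Prop
  | nil (q : σ) : AnnotatesRun M q [] [] q
  | terminal {p r : σ} {u v} (a : T) (h : AnnotatesRun M (M.step p a) u v r) :
      AnnotatesRun M p (.terminal a :: u) (.terminal a :: v) r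
  | nonterminal {q r : σ} {u v} (p : σ) (n : N) (h : AnnotatesRun M q u v r) :
      AnnotatesRun M p (.nonterminal n :: u) (.nonterminal (some (p, n, q)) :: v) r

namespace AnnotatesRun

variable {u u₁ u₂ : List (Symbol T N)} {v v₁ v₂ : List (Symbol T (Option (σ × N × σ)))} {w : List T}

theorem append (h₁ : AnnotatesRun M p u₁ v₁ q) (h₂ : AnnotatesRun M q u₂ v₂ r) :
    AnnotatesRun M p (u₁ ++ u₂) (v₁ ++ v₂) r := by
  induction h₁ with
  | nil => exact h₂
  | terminal a _ ih => exact .terminal a (ih h₂)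
  | nonterminal p n _ ih => exact .nonterminal p n (ih h₂)

theorem exists_of_append_left (h : AnnotatesRun M p (u₁ ++ u₂) v r) :
    ∃ v₁ v₂ q, v = v₁ ++ v₂ ∧ AnnotatesRun M p u₁ v₁ q ∧ AnnotatesRun M q u₂ v₂ r := by
  induction u₁ generalizing p v with
  | nil => exact ⟨[], v, p, rfl, .nil p, h⟩
  | cons x u₁ ih =>
    cases h with
    | terminal a h =>
      obtain ⟨v₁, v₂, q, rfl, h₁, h₂⟩ := ih h
      exact ⟨_, v₂, q, rfl, .terminal a h₁, h₂⟩
    | nonterminal p n h =>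
      obtain ⟨v₁, v₂, q, rfl, h₁, h₂⟩ := ih h
      exact ⟨_, v₂, q, rfl, .nonterminal p n h₁, h₂⟩

theorem exists_of_append_right (h : AnnotatesRun M p u (v₁ ++ v₂) r) :
    ∃ u₁ u₂ q, u = u₁ ++ u₂ ∧ AnnotatesRun M p u₁ v₁ q ∧ AnnotatesRun M q u₂ v₂ r := by
  induction v₁ generalizing p u with
  | nil => exact ⟨[], u, p, rfl, .nil p, h⟩
  | cons x v₁ ih =>
    cases h with
    | terminal a h =>
      obtain ⟨u₁, u₂, q, rfl, h₁, h₂⟩ := ih h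
      exact ⟨_, u₂, q, rfl, .terminal a h₁, h₂⟩
    | nonterminal p n h =>
      obtain ⟨u₁, u₂, q, rfl, h₁, h₂⟩ := ih h
      exact ⟨_, u₂, q, rfl, .nonterminal p n h₁, h₂⟩

theorem map_terminal (M : DFA T σ) (p : σ) (w : List T) :
    AnnotatesRun (N := N) M p (w.map .terminal) (w.map .terminal) (M.evalFrom p w) := by
  induction w generalizing p with
  | nil => exact .nil p
  | cons a w ih => exact .terminal a (ih _)

theorem eq_of_map_terminal_right (h : AnnotatesRun M p u (w.map .terminal) q) :
    u = w.map .terminal ∧ M.evalFrom p w = q := by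
  induction w generalizing p u with
  | nil => cases h; exact ⟨rfl, rfl⟩
  | cons a w ih =>
    cases h with
    | terminal a h =>
      obtain ⟨rfl, hq⟩ := ih h
      exact ⟨rfl, hq⟩

theorem finite_setOf_exists [Finite σ] (M : DFA T σ) (u : List (Symbol T N)) :
    {v | ∃ p q, AnnotatesRun M p u v q}.Finite := by
  induction u with
  | nil =>
    refine (Set.finite_singleton []).subset ?_
    rintro _ ⟨p, q, h⟩
    cases h
    rfl
  | cons x u ih =>
    cases x with
    | terminal a =>
      refine (ih.image (.terminal a :: ·)).subset ?_
      rintro _ ⟨p, q, h⟩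
      cases h with
      | terminal a h => exact ⟨_, ⟨_, _, h⟩, rfl⟩
    | nonterminal n =>
      refine (Set.finite_univ.image2
        (fun (s : σ × σ) v ↦ .nonterminal (some (s.1, n, s.2)) :: v) ih).subset ?_
      rintro _ ⟨p, q, h⟩
      cases h with
      | nonterminal p n h => exact ⟨(_, _), Set.mem_univ _, _, ⟨_, _, h⟩, rfl⟩

end AnnotatesRun

end RunAnnotation

section BarHillel

variable {T : Type*} {σ : Type} (g : ContextFreeGrammar T) (M : DFA T σ)

/-- The rules of `barHillelGrammar`: the rules of `g` annotated with runs of `M`, and rules that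
choose the accepting state in which the run ends. -/
inductive BarHillelRule : ContextFreeRule T (Option (σ × g.NT × σ)) → Prop
  | initial {f : σ} (hf : f ∈ M.accept) :
      BarHillelRule ⟨none, [.nonterminal (some (M.start, g.initial, f))]⟩
  | annotated {r : ContextFreeRule T g.NT} (hr : r ∈ g.rules) {p q : σ} {v}
      (hv : AnnotatesRun M p r.output v q) : BarHillelRule ⟨some (p, r.input, q), v⟩

theorem finite_setOf_barHillelRule [Finite σ] : {ρ | BarHillelRule g M ρ}.Finite := by
  have initial_finite := Set.finite_range fun f : σ ↦
    (⟨none, [.nonterminal (some (M.start, g.initial, f))]⟩ :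
      ContextFreeRule T (Option (σ × g.NT × σ)))
  have annotated_finite := g.rules.finite_toSet.biUnion fun r _ ↦
    Set.finite_univ.image2 (fun (s : σ × σ) v ↦
      (⟨some (s.1, r.input, s.2), v⟩ : ContextFreeRule T (Option (σ × g.NT × σ))))
      (AnnotatesRun.finite_setOf_exists M r.output)
  refine (initial_finite.union annotated_finite).subset ?_
  rintro _ (⟨hf⟩ | ⟨hr, hv⟩)
  · exact .inl ⟨_, rfl⟩
  · exact .inr <| Set.mem_biUnion hr ⟨(_, _), Set.mem_univ _, _, ⟨_, _, hv⟩, rfl⟩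

/-- The Bar-Hillel grammar for the intersection of `g.language` with `M.accepts`. -/
noncomputable def barHillelGrammar [Finite σ] : ContextFreeGrammar T where
  NT := Option (σ × g.NT × σ)
  initial := none
  rules := (finite_setOf_barHillelRule g M).toFinset

variable {g M} [Finite σ] {p q : σ} {u u' : List (Symbol T g.NT)}
  {v v' : List (Symbol T (Option (σ × g.NT × σ)))} {w : List T}

theorem mem_barHillelGrammar_rules {ρ : ContextFreeRule T (Option (σ × g.NT × σ))} :
    ρ ∈ (barHillelGrammar g M).rules ↔ BarHillelRule g M ρ :=
  (finite_setOf_barHillelRule g M).mem_toFinset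

theorem AnnotatesRun.exists_produces_left (h : AnnotatesRun M p u v q)
    (hv : (barHillelGrammar g M).Produces v v') :
    ∃ u', g.Produces u u' ∧ AnnotatesRun M p u' v' q := by
  obtain ⟨ρ, hρ, hrw⟩ := hv
  obtain ⟨x, y, rfl, rfl⟩ := hrw.exists_parts
  obtain ⟨_, u₃, s, rfl, h, h₃⟩ := h.exists_of_append_right
  obtain ⟨u₁, _, t, rfl, h₁, h₂⟩ := h.exists_of_append_right
  cases mem_barHillelGrammar_rules.1 hρ with
  | initial => cases h₂
  | @annotated r hr _ _ _ hout =>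
    cases h₂ with
    | nonterminal _ _ h₂ =>
      cases h₂
      exact ⟨u₁ ++ r.output ++ u₃, ⟨r, hr, r.rewrites_of_exists_parts u₁ u₃⟩,
        (h₁.append hout).append h₃⟩

theorem AnnotatesRun.exists_produces_right (h : AnnotatesRun M p u' v' q) (hu : g.Produces u u') :
    ∃ v, (barHillelGrammar g M).Produces v v' ∧ AnnotatesRun M p u v q := by
  obtain ⟨r, hr, hrw⟩ := hu
  obtain ⟨x, y, rfl, rfl⟩ := hrw.exists_parts
  obtain ⟨_, v₃, s, rfl, h, h₃⟩ := h.exists_of_append_left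
  obtain ⟨v₁, _, t, rfl, h₁, h₂⟩ := h.exists_of_append_left
  exact ⟨_, ⟨_, mem_barHillelGrammar_rules.2 (.annotated hr h₂),
    ContextFreeRule.rewrites_of_exists_parts _ v₁ v₃⟩,
    (h₁.append (.nonterminal t r.input (.nil s))).append h₃⟩

theorem AnnotatesRun.derives_left (h : AnnotatesRun M p u v q)
    (hv : (barHillelGrammar g M).Derives v (w.map .terminal)) :
    g.Derives u (w.map .terminal) ∧ M.evalFrom p w = q := by
  induction hv using Relation.ReflTransGen.head_induction_on generalizing u with
  | refl =>
    obtain ⟨rfl, hq⟩ := h.eq_of_map_terminal_right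
    exact ⟨.refl _, hq⟩
  | head hprod _ ih =>
    obtain ⟨u', hu, h'⟩ := h.exists_produces_left hprod
    exact (ih h').imp_left hu.trans_derives

theorem exists_annotatesRun_derives (p : σ) (hu : g.Derives u (w.map .terminal)) :
    ∃ v, AnnotatesRun M p u v (M.evalFrom p w) ∧
      (barHillelGrammar g M).Derives v (w.map .terminal) := by
  induction hu using Relation.ReflTransGen.head_induction_on with
  | refl => exact ⟨_, .map_terminal M p w, .refl _⟩
  | head hprod _ ih =>
    obtain ⟨v', h', hv'⟩ := ih
    obtain ⟨v, hv, h⟩ := h'.exists_produces_right hprod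
    exact ⟨v, h, hv.trans_derives hv'⟩

theorem exists_accept_of_produces_initial
    (h : (barHillelGrammar g M).Produces [.nonterminal none] v) :
    ∃ f ∈ M.accept, v = [.nonterminal (some (M.start, g.initial, f))] := by
  obtain ⟨ρ, hρ, hrw⟩ := h
  obtain ⟨x, y, hxy, rfl⟩ := hrw.exists_parts
  obtain ⟨rfl, hρ_input, rfl⟩ : x = [] ∧ ρ.input = none ∧ y = [] := by
    grind [List.append_eq_singleton_iff]
  cases mem_barHillelGrammar_rules.1 hρ with
  | initial hf => exact ⟨_, hf, rfl⟩
  | annotated => cases hρ_input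

theorem language_barHillelGrammar : (barHillelGrammar g M).language = g.language ⊓ M.accepts := by
  ext w
  rw [Language.mem_inf, ContextFreeGrammar.mem_language_iff, ContextFreeGrammar.mem_language_iff,
    DFA.mem_accepts]
  constructor
  · intro hw
    obtain hw | ⟨v, hstep, hv⟩ := ContextFreeGrammar.Derives.eq_or_head hw
    · cases w <;> cases hw
    · obtain ⟨f, hf, rfl⟩ := exists_accept_of_produces_initial hstep
      obtain ⟨hg, rfl⟩ := (AnnotatesRun.nonterminal M.start g.initial (.nil f)).derives_left hv
      exact ⟨hg, hf⟩
  · rintro ⟨hw, hf⟩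
    obtain ⟨v, hrun, hv⟩ := exists_annotatesRun_derives (M := M) M.start hw
    obtain rfl : v = [.nonterminal (some (M.start, g.initial, M.eval w))] := by
      cases hrun with
      | nonterminal _ _ hnil => cases hnil; rfl
    exact ContextFreeGrammar.Produces.trans_derives
      ⟨_, mem_barHillelGrammar_rules.2 (.initial hf), .input_output⟩ hv

theorem isContextFree_inf_isRegular {L R : Language T} (hL : L.IsContextFree)
    (hR : R.IsRegular) : (L ⊓ R).IsContextFree := by
  obtain ⟨g, rfl⟩ := hL
  obtain ⟨σ, _, M, rfl⟩ := hR
  exact ⟨barHillelGrammar g M, language_barHillelGrammar⟩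

end BarHillel

section Ballot

/-- `IsBallot f n l`: the walk that starts at height `n` and climbs by `f a` at each letter `a` of
`l` never goes below height `0`. -/
def IsBallot {α G : Type*} [AddMonoid G] [LE G] (f : α → G) (n : G) (l : List α) : Prop :=
  ∀ p, p <+: l → 0 ≤ n + (p.map f).sum

namespace IsBallot

variable {α β G : Type*} [AddMonoid G]

section LE

variable [LE G] {f : α → G} {n : G} {a : α} {l l₁ l₂ : List α}

theorem start_nonneg (h : IsBallot f n l) : 0 ≤ n := by
  simpa using h [] List.nil_prefix

theorem nil_iff : IsBallot f n [] ↔ 0 ≤ n := by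
  simp [IsBallot]

theorem cons_iff : IsBallot f n (a :: l) ↔ 0 ≤ n ∧ IsBallot f (n + f a) l := by
  constructor
  · intro h
    refine ⟨h.start_nonneg, fun p hp ↦ ?_⟩
    simpa [add_assoc] using h (a :: p) (List.cons_prefix_cons.2 ⟨rfl, hp⟩)
  · rintro ⟨hn, h⟩ p hp
    obtain rfl | ⟨q, rfl, hq⟩ := List.prefix_cons_iff.1 hp
    · simpa using hn
    · simpa [add_assoc] using h q hq

theorem append_iff :
    IsBallot f n (l₁ ++ l₂) ↔ IsBallot f n l₁ ∧ IsBallot f (n + (l₁.map f).sum) l₂ := by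
  induction l₁ generalizing n with
  | nil => simpa [nil_iff] using start_nonneg
  | cons a l₁ ih => simp [cons_iff, ih, and_assoc, add_assoc]

theorem map_iff {e : β → α} {l : List β} : IsBallot f n (l.map e) ↔ IsBallot (f ∘ e) n l := by
  induction l generalizing n with
  | nil => simp only [List.map_nil, nil_iff]
  | cons a l ih => simp only [List.map_cons, cons_iff, ih, Function.comp_apply]

end LE

theorem mono [Preorder G] [AddRightMono G] {f : α → G} {m n : G} {l : List α}
    (h : IsBallot f m l) (hmn : m ≤ n) : IsBallot f n l :=
  fun p hp ↦ (h p hp).trans (by gcongr)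

end IsBallot

/-- The nonterminals of `ballotGrammar`: `word` produces the words themselves, and `closer`
produces an optional letter of weight `-1`. -/
inductive BallotNonterminal
  | word
  | closer

open BallotNonterminal

variable {α : Type*} (weight : α → SignType)

/-- The rules of `ballotGrammar`. Each letter of weight `1` is followed by a `closer`, whose erasure
leaves that letter unmatched. -/
inductive BallotRule : ContextFreeRule α BallotNonterminal → Prop
  | eraseWord : BallotRule ⟨word, []⟩
  | eraseCloser : BallotRule ⟨closer, []⟩
  | flat {a : α} (ha : weight a = 0) : BallotRule ⟨word, [.terminal a, .nonterminal word]⟩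
  | up {a : α} (ha : weight a = 1) : BallotRule
      ⟨word, [.terminal a, .nonterminal word, .nonterminal closer, .nonterminal word]⟩
  | down {a : α} (ha : weight a = -1) : BallotRule ⟨closer, [.terminal a]⟩

theorem finite_setOf_ballotRule [Finite α] : {r | BallotRule weight r}.Finite := by
  have erase_finite : ({⟨word, []⟩, ⟨closer, []⟩} :
      Set (ContextFreeRule α BallotNonterminal)).Finite := Set.toFinite _
  have flat_finite := Set.finite_range fun a : α ↦
    (⟨word, [.terminal a, .nonterminal word]⟩ : ContextFreeRule α BallotNonterminal)
  have up_finite := Set.finite_range fun a : α ↦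
    (⟨word, [.terminal a, .nonterminal word, .nonterminal closer, .nonterminal word]⟩ :
      ContextFreeRule α BallotNonterminal)
  have down_finite := Set.finite_range fun a : α ↦
    (⟨closer, [.terminal a]⟩ : ContextFreeRule α BallotNonterminal)
  refine (((erase_finite.union flat_finite).union up_finite).union down_finite).subset ?_
  rintro _ (_ | _ | _ | _ | _) <;> simp

/-- A grammar for the words over `α` all of whose prefixes have nonnegative weight. -/
noncomputable def ballotGrammar [Finite α] : ContextFreeGrammar α where
  NT := BallotNonterminal
  initial := word
  rules := (finite_setOf_ballotRule weight).toFinset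

/-- The least weight of a word produced by a symbol of `ballotGrammar`. -/
def ballotSymbolWeight : Symbol α BallotNonterminal → ℤ
  | .terminal a => weight a
  | .nonterminal word => 0
  | .nonterminal closer => -1

/-- The sentential form `word (closer word)ⁿ`, from which `ballotGrammar` produces the words that
stay nonnegative when starting at height `n`. -/
def ballotStack (α : Type*) : ℕ → List (Symbol α BallotNonterminal)
  | 0 => [.nonterminal word]
  | n + 1 => .nonterminal word :: .nonterminal closer :: ballotStack α n

variable {weight}

theorem BallotRule.isBallot_output {r : ContextFreeRule α BallotNonterminal}
    (hr : BallotRule weight r) {n : ℤ} {y : List (Symbol α BallotNonterminal)}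
    (h : IsBallot (ballotSymbolWeight weight) n (.nonterminal r.input :: y)) :
    IsBallot (ballotSymbolWeight weight) n (r.output ++ y) := by
  obtain ⟨hn, hy⟩ := IsBallot.cons_iff.1 h
  cases hr with
  | eraseWord => simpa [ballotSymbolWeight] using hy
  | eraseCloser => exact hy.mono (by simp [ballotSymbolWeight])
  | flat ha => simpa [IsBallot.cons_iff, ballotSymbolWeight, ha, hn] using hy
  | up ha =>
    simpa [IsBallot.cons_iff, ballotSymbolWeight, ha, hn, Int.le_add_one hn] using hy
  | down ha => simpa [IsBallot.cons_iff, ballotSymbolWeight, ha, hn] using hy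

variable [Finite α]

theorem mem_ballotGrammar_rules {r : ContextFreeRule α BallotNonterminal} :
    r ∈ (ballotGrammar weight).rules ↔ BallotRule weight r :=
  (finite_setOf_ballotRule weight).mem_toFinset

theorem isBallot_of_produces {u v : List (Symbol α BallotNonterminal)}
    (hu : IsBallot (ballotSymbolWeight weight) 0 u) (h : (ballotGrammar weight).Produces u v) :
    IsBallot (ballotSymbolWeight weight) 0 v := by
  obtain ⟨r, hr, hrw⟩ := h
  obtain ⟨x, y, rfl, rfl⟩ := hrw.exists_parts
  rw [List.append_assoc] at hu ⊢
  obtain ⟨hx, hy⟩ := IsBallot.append_iff.1 hu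
  exact IsBallot.append_iff.2 ⟨hx, (mem_ballotGrammar_rules.1 hr).isBallot_output hy⟩

theorem isBallot_of_derives {u v : List (Symbol α BallotNonterminal)}
    (hu : IsBallot (ballotSymbolWeight weight) 0 u) (h : (ballotGrammar weight).Derives u v) :
    IsBallot (ballotSymbolWeight weight) 0 v := by
  induction h with
  | refl => exact hu
  | tail _ hstep ih => exact isBallot_of_produces ih hstep

theorem isBallot_of_mem_language_ballotGrammar {w : List α}
    (hw : w ∈ (ballotGrammar weight).language) :
    IsBallot (fun a ↦ (weight a : ℤ)) 0 w := by
  have initial_isBallot : IsBallot (ballotSymbolWeight weight) 0 [.nonterminal word] := by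
    simp [IsBallot.cons_iff, IsBallot.nil_iff, ballotSymbolWeight]
  exact IsBallot.map_iff.1 (isBallot_of_derives initial_isBallot hw)

theorem BallotRule.derives {r : ContextFreeRule α BallotNonterminal} (hr : BallotRule weight r)
    (y : List (Symbol α BallotNonterminal)) :
    (ballotGrammar weight).Derives (.nonterminal r.input :: y) (r.output ++ y) :=
  ContextFreeGrammar.Produces.single ⟨r, mem_ballotGrammar_rules.2 hr, .head y⟩

theorem ballotStack_derives_nil (n : ℕ) : (ballotGrammar weight).Derives (ballotStack α n) [] := by
  induction n with
  | zero => exact BallotRule.eraseWord.derives []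
  | succ n ih =>
    exact (BallotRule.eraseWord.derives _).trans <| (BallotRule.eraseCloser.derives _).trans ih

theorem ballotStack_derives_cons {a : α} {m n : ℕ} (h : (m : ℤ) = n + weight a) :
    (ballotGrammar weight).Derives (ballotStack α n) (.terminal a :: ballotStack α m) := by
  obtain ha | ha | ha := (weight a).trichotomy
  · obtain rfl : n = m + 1 := by rw [ha, SignType.coe_neg_one] at h; omega
    exact (BallotRule.eraseWord.derives _).trans ((BallotRule.down ha).derives _)
  · obtain rfl : m = n := by simpa [ha] using h
    cases m <;> exact (BallotRule.flat ha).derives _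
  · obtain rfl : m = n + 1 := by rw [ha, SignType.coe_one] at h; omega
    cases n <;> exact (BallotRule.up ha).derives _

theorem ballotStack_derives {n : ℕ} {w : List α} (hw : IsBallot (fun a ↦ (weight a : ℤ)) n w) :
    (ballotGrammar weight).Derives (ballotStack α n) (w.map .terminal) := by
  induction w generalizing n with
  | nil => exact ballotStack_derives_nil n
  | cons a w ih =>
    have htail := (IsBallot.cons_iff.1 hw).2
    obtain ⟨m, hm⟩ := Int.eq_ofNat_of_zero_le htail.start_nonneg
    rw [hm] at htail
    exact (ballotStack_derives_cons hm.symm).trans ((ih htail).append_left [.terminal a])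

theorem isContextFree_setOf_isBallot (weight : α → SignType) :
    Language.IsContextFree ({w | IsBallot (fun a ↦ (weight a : ℤ)) 0 w} : Language α) :=
  ⟨ballotGrammar weight, Set.ext fun _ ↦
    ⟨isBallot_of_mem_language_ballotGrammar, fun hw ↦ ballotStack_derives (n := 0) hw⟩⟩

end Ballot

section ThompsonF

/-- The letters `0` and `1` stand for `x₀` and `x₀⁻¹`, so this is the `x₀`-exponent with its sign
reversed. -/
def thompsonWeight : Fin 4 → SignType := ![-1, 1, 0, 0]

theorem sum_map_thompsonWeight (w : List (Fin 4)) :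
    (w.map fun a ↦ (thompsonWeight a : ℤ)).sum = w.count 1 - w.count 0 := by
  induction w with
  | nil => rfl
  | cons a w ih =>
    rw [List.map_cons, List.sum_cons, ih]
    fin_cases a <;> simp [thompsonWeight] <;> ring

end ThompsonF

/-- over the four-letter alphabet `{x₀, X₀, x₁, X₁}` (encoded as `Fin 4`
with `0 ↦ x₀`, `1 ↦ X₀`, `2 ↦ x₁`, `3 ↦ X₁`), the normal form language for Thompson's
group `F` — words avoiding the forbidden factors
`x₀X₀, X₀x₀, x₁X₁, X₁x₁, x₀x₀x₁, x₀x₀X₁` all of whose prefixes have `x₀`-exponent sum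
at most `0` — is context-free. -/
theorem thompsonF_normalForm_language_isContextFree :
    Language.IsContextFree
      ({w : List (Fin 4) |
        (∀ u ∈ ([[0, 1], [1, 0], [2, 3], [3, 2], [0, 0, 2], [0, 0, 3]] :
            List (List (Fin 4))), ¬ u <:+: w) ∧
        ∀ p : List (Fin 4), p <+: w →
          ((p.count 0 : ℤ) - (p.count 1 : ℤ)) ≤ 0} : Language (Fin 4)) := by
  set U : List (List (Fin 4)) := [[0, 1], [1, 0], [2, 3], [3, 2], [0, 0, 2], [0, 0, 3]]
  have ballot_isContextFree := isContextFree_setOf_isBallot thompsonWeight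
  have avoiding_isRegular := isRegular_setOf_forall_not_isInfix U.finite_toSet
  refine (congrArg Language.IsContextFree (Set.ext fun w ↦ ?_)).mpr
    (isContextFree_inf_isRegular ballot_isContextFree avoiding_isRegular)
  refine and_comm.trans (and_congr_left' (forall₂_congr fun p _ ↦ ?_))
  rw [sum_map_thompsonWeight, zero_add, sub_nonneg, sub_nonpos]
end
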